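/- arXiv:2009.09260 — 3 statements merged into one kernel-verified Lean document; each statement's English description precedes it below -/
import Mathlib

section
/- Let X be a compact metric space and (f_t)_{t∈ℝ} a continuous flow on X that is topologically transitive. Then the set of τ ∈ (0,∞) such that the time-τ map f_τ : X → X is topologically transitive is residual in (0,∞) (it contains a countable intersection of open dense subsets of (0,∞)); in particular, this set is dense in (0,∞). -/
/-!
For open sets `U`, `V`, let `N(U, V)` be the set of times `t` with `f_t(U) ∩ V ≠ ∅`; it is open.
If `U` and `V` are nonempty, it is also unbounded above: a time moving `U` into `f_T⁻¹(V)`, plus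
`T`, moves `U` into `V`. Hence `N(U, V)` meets `[k * a, k * b]` for some `k ≥ 1` whenever
`0 < a < b`, because these intervals eventually overlap and so cover a half-line. In other words,
the open set of all `τ` with a multiple `k * τ ∈ N(U, V)`, that is, `f_τ^k(U) ∩ V ≠ ∅`, is dense
in `(0, ∞)`. Intersecting over pairs from a countable basis gives a residual set of times with
transitive maps, and density follows from the Baire category theorem.
-/

open Filter Set Topology TopologicalSpace

section Residual

variable {Y : Type*} [TopologicalSpace Y] {O s t : Set Y}

/-- `s` is residual in the subset `O`. Everything is phrased with subsets of the ambient space,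
and `s` is not required to be contained in `O`. -/
def IsResidualIn (O s : Set Y) : Prop :=
  ∃ A : ℕ → Set Y, (∀ n, IsOpen (A n)) ∧ (∀ n, A n ⊆ O) ∧ (∀ n, O ⊆ closure (A n)) ∧
    ⋂ n, A n ⊆ s

theorem IsResidualIn.mono (hs : IsResidualIn O s) (hst : s ⊆ t) : IsResidualIn O t := by
  obtain ⟨A, hopen, hAO, hdense, hAs⟩ := hs
  exact ⟨A, hopen, hAO, hdense, hAs.trans hst⟩

theorem isResidualIn_iInter {ι : Type*} [Countable ι] {A : ι → Set Y} (hO : IsOpen O)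
    (hopen : ∀ i, IsOpen (A i)) (hdense : ∀ i, O ⊆ closure (A i)) :
    IsResidualIn O (⋂ i, A i) := by
  -- `Option` adds the whole space to the family, so that it can be enumerated even if `ι` is empty.
  let A' : Option ι → Set Y := fun i => i.elim univ A
  have hopen' : ∀ i, IsOpen (A' i) := Option.forall.2 ⟨isOpen_univ, hopen⟩
  have hdense' : ∀ i, O ⊆ closure (A' i) :=
    Option.forall.2 ⟨(subset_univ O).trans subset_closure, hdense⟩
  obtain ⟨e, he⟩ := exists_surjective_nat (Option ι)
  refine ⟨fun n => O ∩ A' (e n), fun n => hO.inter (hopen' _), fun n => inter_subset_left,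
    fun n => (subset_inter subset_rfl (hdense' _)).trans hO.inter_closure, fun y hy => ?_⟩
  refine mem_iInter.2 fun i => ?_
  obtain ⟨n, hn⟩ := he (some i)
  have hyn : y ∈ A' (e n) := (mem_iInter.1 hy n).2
  rwa [hn] at hyn

theorem IsResidualIn.subset_closure_inter [BaireSpace Y] (hs : IsResidualIn O s)
    (hO : IsOpen O) : O ⊆ closure (O ∩ s) := by
  obtain ⟨A, hopen, -, hdense, hAs⟩ := hs
  -- Adding the exterior of `O` makes the sets dense in the whole space.
  have hinter : Dense (⋂ n, (A n ∪ (closure O)ᶜ)) := by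
    refine dense_iInter_of_isOpen_nat
      (fun n => (hopen n).union isClosed_closure.isOpen_compl) fun n y => ?_
    rw [closure_union]
    by_cases hy : y ∈ closure O
    · exact Or.inl (closure_minimal (hdense n) isClosed_closure hy)
    · exact Or.inr (subset_closure hy)
  refine (hinter.open_subset_closure_inter hO).trans (closure_mono ?_)
  rintro y ⟨hyO, hy⟩
  exact ⟨hyO, hAs <| mem_iInter.2 fun n =>
    (mem_iInter.1 hy n).resolve_right fun hyc => hyc (subset_closure hyO)⟩

end Residual

section Submultiples

/-- The elements having a positive integer multiple in `S`; for a set `S` of times of a flow, these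
are the step sizes `τ` for which some iterate of the time-`τ` map is a map `f_t` with `t ∈ S`. -/
def submultiples {M : Type*} [AddMonoid M] (S : Set M) : Set M :=
  {τ | ∃ k : ℕ, 0 < k ∧ k • τ ∈ S}

theorem isOpen_submultiples {M : Type*} [AddMonoid M] [TopologicalSpace M] [ContinuousAdd M]
    {S : Set M} (hS : IsOpen S) : IsOpen (submultiples S) := by
  have hunion : submultiples S = ⋃ (k : ℕ) (_ : 0 < k), (k • ·) ⁻¹' S := by
    ext τ
    simp [submultiples]
  rw [hunion]
  exact isOpen_iUnion fun k => isOpen_iUnion fun _ => hS.preimage (continuous_nsmul k)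

theorem eventually_exists_div_natCast_mem_Icc {a b : ℝ} (ha : 0 < a) (hab : a < b) :
    ∀ᶠ t : ℝ in atTop, ∃ k : ℕ, 0 < k ∧ t / k ∈ Icc a b := by
  have hb : 0 < b := ha.trans hab
  have hinv : b⁻¹ < a⁻¹ := inv_strictAnti₀ ha hab
  filter_upwards [eventually_gt_atTop 0,
    LinearGrowth.Real.eventually_atTop_exists_nat_between hinv (inv_pos.2 ha).le]
    with t ht ⟨k, hbk, hka⟩
  have hk : (0 : ℝ) < k := (mul_pos (inv_pos.2 hb) ht).trans_le hbk
  refine ⟨k, Nat.cast_pos.1 hk, (le_div_iff₀' hk).2 ?_, (div_le_iff₀ hk).2 ?_⟩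
  · rwa [← le_div_iff₀ ha, div_eq_inv_mul]
  · rwa [← div_le_iff₀' hb, div_eq_inv_mul]

theorem Ioi_subset_closure_submultiples {S : Set ℝ} (hS : ∃ᶠ t in atTop, t ∈ S) :
    Ioi 0 ⊆ closure (submultiples S) := by
  intro a (ha : 0 < a)
  refine mem_closure_iff_nhds.2 fun u hu => ?_
  obtain ⟨c, hac, hcu⟩ := exists_Ico_subset_of_mem_nhds hu (exists_gt a)
  obtain ⟨b, hab, hbc⟩ := exists_between hac
  obtain ⟨t, htS, k, hk, htk⟩ :=
    (hS.and_eventually (eventually_exists_div_natCast_mem_Icc ha hab)).exists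
  refine ⟨t / k, hcu (Icc_subset_Ico_right hbc htk), k, hk, ?_⟩
  rwa [nsmul_eq_mul, mul_div_cancel₀ t (Nat.cast_ne_zero.2 hk.ne')]

end Submultiples

section HittingTimes

variable {T X : Type*} {f : T → X → X} {U V : Set X}

/-- The set `N(U, V)` of times at which the family of maps `f` carries some point of `U` into `V`.
The times are real for a flow, and natural numbers for the iterates of a map. -/
def hittingTimes (f : T → X → X) (U V : Set X) : Set T :=
  {t | (f t '' U ∩ V).Nonempty}

theorem hittingTimes_mono {U' V' : Set X} (hU : U ⊆ U') (hV : V ⊆ V') :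
    hittingTimes f U V ⊆ hittingTimes f U' V' :=
  fun _ ht => ht.mono (inter_subset_inter (image_mono hU) hV)

theorem isOpen_hittingTimes [TopologicalSpace T] [TopologicalSpace X]
    (hf : ∀ x, Continuous fun t => f t x) (hV : IsOpen V) : IsOpen (hittingTimes f U V) := by
  have hunion : hittingTimes f U V = ⋃ x ∈ U, (fun t => f t x) ⁻¹' V := by
    ext t
    simp [hittingTimes, Set.Nonempty]
  rw [hunion]
  exact isOpen_biUnion fun x _ => hV.preimage (hf x)

/-- Topological transitivity of a flow `f` or, taking `f k = g^[k]` for `k : ℕ`, of a map `g`.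
Time zero does not count. -/
def IsTopologicallyTransitive [TopologicalSpace X] [Zero T] [LT T] (f : T → X → X) : Prop :=
  ∀ U V : Set X, IsOpen U → IsOpen V → U.Nonempty → V.Nonempty →
    ∃ t : T, 0 < t ∧ t ∈ hittingTimes f U V

theorem isTopologicallyTransitive_of_isTopologicalBasis [TopologicalSpace X] [Zero T] [LT T]
    {B : Set (Set X)} (hB : IsTopologicalBasis B)
    (h : ∀ U ∈ B, ∀ V ∈ B, U.Nonempty → V.Nonempty → ∃ t : T, 0 < t ∧ t ∈ hittingTimes f U V) :
    IsTopologicallyTransitive f := by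
  rintro U V hU hV ⟨u, hu⟩ ⟨v, hv⟩
  obtain ⟨U', hU', huU', hUU⟩ := hB.exists_subset_of_mem_open hu hU
  obtain ⟨V', hV', hvV', hVV⟩ := hB.exists_subset_of_mem_open hv hV
  obtain ⟨t, ht, hmem⟩ := h U' hU' V' hV' ⟨u, huU'⟩ ⟨v, hvV'⟩
  exact ⟨t, ht, hittingTimes_mono hUU hVV hmem⟩

end HittingTimes

section Flow

variable {X : Type*} {U V : Set X}

theorem iterate_eq_nsmul_of_map_add {M : Type*} [AddMonoid M] {f : M → X → X}
    (hf0 : ∀ x, f 0 x = x) (hfadd : ∀ s t x, f (s + t) x = f s (f t x)) (τ : M) (k : ℕ) :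
    (f τ)^[k] = f (k • τ) := by
  funext x
  induction k with
  | zero => rw [zero_nsmul, hf0, Function.iterate_zero_apply]
  | succ k ih => rw [Function.iterate_succ_apply', ih, ← hfadd, ← succ_nsmul']

theorem mem_submultiples_hittingTimes_iff {M : Type*} [AddMonoid M] {f : M → X → X}
    (hf0 : ∀ x, f 0 x = x) (hfadd : ∀ s t x, f (s + t) x = f s (f t x)) {τ : M} :
    τ ∈ submultiples (hittingTimes f U V) ↔
      ∃ k : ℕ, 0 < k ∧ k ∈ hittingTimes (fun k => (f τ)^[k]) U V := by
  simp only [submultiples, hittingTimes, mem_ofPred_eq, iterate_eq_nsmul_of_map_add hf0 hfadd]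

variable [TopologicalSpace X]

theorem IsTopologicallyTransitive.frequently_mem_hittingTimes {G : Type*} [AddCommGroup G]
    [LinearOrder G] [IsOrderedAddMonoid G] {f : G → X → X} (h : IsTopologicallyTransitive f)
    (hcont : ∀ t, Continuous (f t)) (hf0 : ∀ x, f 0 x = x)
    (hfadd : ∀ s t x, f (s + t) x = f s (f t x)) (hU : IsOpen U) (hV : IsOpen V)
    (hUne : U.Nonempty) (hVne : V.Nonempty) : ∃ᶠ t in atTop, t ∈ hittingTimes f U V := by
  refine frequently_atTop.2 fun T => ?_
  have hsurj : Function.Surjective (f T) := fun v =>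
    ⟨f (-T) v, by rw [← hfadd, add_neg_cancel, hf0]⟩
  obtain ⟨t, ht, -, ⟨x, hx, rfl⟩, hxV⟩ :=
    h U (f T ⁻¹' V) hU (hV.preimage (hcont T)) hUne (hVne.preimage hsurj)
  refine ⟨T + t, le_add_of_nonneg_right ht.le, f (T + t) x, mem_image_of_mem _ hx, ?_⟩
  rwa [hfadd]

theorem IsTopologicallyTransitive.isResidualIn_setOf_iterate [SecondCountableTopology X]
    {f : ℝ → X → X} (h : IsTopologicallyTransitive f) (hcont_space : ∀ t, Continuous (f t))
    (hcont_time : ∀ x, Continuous fun t => f t x) (hf0 : ∀ x, f 0 x = x)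
    (hfadd : ∀ s t x, f (s + t) x = f s (f t x)) :
    IsResidualIn (Ioi 0) {τ | IsTopologicallyTransitive fun k : ℕ => (f τ)^[k]} := by
  have hB := isBasis_countableBasis X
  have hopen : ∀ p : countableBasis X × countableBasis X,
      IsOpen (submultiples (hittingTimes f p.1 p.2)) := fun p =>
    isOpen_submultiples (isOpen_hittingTimes hcont_time (hB.isOpen p.2.2))
  have hdense : ∀ p : countableBasis X × countableBasis X,
      Ioi 0 ⊆ closure (submultiples (hittingTimes f p.1 p.2)) := fun p =>
    Ioi_subset_closure_submultiples <| h.frequently_mem_hittingTimes hcont_space hf0 hfadd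
      (hB.isOpen p.1.2) (hB.isOpen p.2.2) (nonempty_of_mem_countableBasis p.1.2)
      (nonempty_of_mem_countableBasis p.2.2)
  refine (isResidualIn_iInter isOpen_Ioi hopen hdense).mono fun τ hτ => ?_
  refine isTopologicallyTransitive_of_isTopologicalBasis hB fun U hU V hV _ _ => ?_
  exact (mem_submultiples_hittingTimes_iff hf0 hfadd).1 (mem_iInter.1 hτ (⟨U, hU⟩, ⟨V, hV⟩))

end Flow

theorem stmt1_general {X : Type*} [TopologicalSpace X] [SecondCountableTopology X]
    {f : ℝ → X → X} (hcont_space : ∀ t, Continuous (f t))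
    (hcont_time : ∀ x, Continuous fun t => f t x) (hf0 : ∀ x, f 0 x = x)
    (hfadd : ∀ s t x, f (s + t) x = f s (f t x)) (htrans : IsTopologicallyTransitive f) :
    IsResidualIn (Ioi 0) {τ | IsTopologicallyTransitive fun k : ℕ => (f τ)^[k]} ∧
      Ioi 0 ⊆ closure (Ioi 0 ∩ {τ | IsTopologicallyTransitive fun k : ℕ => (f τ)^[k]}) :=
  have hres := htrans.isResidualIn_setOf_iterate hcont_space hcont_time hf0 hfadd
  ⟨hres, hres.subset_closure_inter isOpen_Ioi⟩

/-- If a continuous flow on a compact metric space is topologically transitive, then the set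
of `τ ∈ (0,∞)` for which the time-`τ` map is topologically transitive contains a countable
intersection of open dense subsets of `(0,∞)`; in particular it is dense in `(0,∞)`. -/
theorem stmt1 {X : Type*} [MetricSpace X] [CompactSpace X]
    (f : ℝ → X → X)
    (hcont : Continuous fun p : ℝ × X => f p.1 p.2)
    (hf0 : ∀ x, f 0 x = x)
    (hfadd : ∀ s t x, f (s + t) x = f s (f t x))
    (htrans : ∀ U V : Set X, IsOpen U → IsOpen V → U.Nonempty → V.Nonempty →
      ∃ t : ℝ, 0 < t ∧ (f t '' U ∩ V).Nonempty) :
    (∃ A : ℕ → Set ℝ,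
      (∀ n, IsOpen (A n)) ∧ (∀ n, A n ⊆ Set.Ioi 0) ∧
      (∀ n, Set.Ioi (0:ℝ) ⊆ closure (A n)) ∧
      (⋂ n, A n) ⊆ {τ : ℝ | ∀ U V : Set X, IsOpen U → IsOpen V → U.Nonempty → V.Nonempty →
        ∃ k : ℕ, 1 ≤ k ∧ ((f τ)^[k] '' U ∩ V).Nonempty}) ∧
    Set.Ioi (0:ℝ) ⊆ closure {τ : ℝ | τ ∈ Set.Ioi (0:ℝ) ∧
      ∀ U V : Set X, IsOpen U → IsOpen V → U.Nonempty → V.Nonempty →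
        ∃ k : ℕ, 1 ≤ k ∧ ((f τ)^[k] '' U ∩ V).Nonempty} :=
  stmt1_general (fun t => hcont.comp (Continuous.prodMk_right t))
    (fun x => hcont.comp (Continuous.prodMk_left x)) hf0 hfadd htrans
end

section
/- Let (f_t)_{t∈ℝ} be a continuous flow on a metric space (X,d), let σ > 0, let φ : X → ℝ be a bounded σ-Hölder continuous function, and let P ∈ ℝ. For points u, v ∈ X and s ∈ ℝ satisfying d(f_{τ+s} u, f_τ v) ≤ δ λ^τ for all τ ≥ 0 (for some δ > 0, λ ∈ (0,1)), define ω(u,v;s) = Φ(u,s) − sP + ∫_0^∞ (φ(f_{τ+s} u) − φ(f_τ v)) dτ, where Φ(z,t) = ∫_0^t φ(f_s z) ds. Suppose x, z, y ∈ X, t_1, t_2 ∈ ℝ, δ > 0, λ ∈ (0,1) are such that d(f_{τ+t_1} x, f_τ z) ≤ δ λ^τ, d(f_{τ+t_2} z, f_τ y) ≤ δ λ^τ, and d(f_{τ+t_1+t_2} x, f_τ y) ≤ δ λ^τ for all τ ≥ 0. Then ω satisfies the cocycle relation ω(x,y;t_1+t_2) = ω(x,z;t_1) + ω(z,y;t_2).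 -/
open MeasureTheory

open Set
open scoped NNReal

/-!
The value `ω(u,v;s)` does not depend on where the Birkhoff integrals are cut: for every `T`,
`ω(u,v;s) = ∫_0^{T+s} φ(f_τ u) dτ - ∫_0^T φ(f_τ v) dτ - sP + ∫_T^∞ (φ(f_{τ+s} u) - φ(f_τ v)) dτ`.
Cutting `ω(x,z;t₁)` at `T = t₂` and `ω(z,y;t₂)` at `T = 0`, the integrals of `φ` over the orbit of
`z` cancel, both the finite ones and those in the tails.
-/

section RealLine

variable {E : Type*} [NormedAddCommGroup E]

theorem integrableOn_Ioi_of_intervalIntegrable {g : ℝ → E} {μ : Measure ℝ} {a b : ℝ}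
    (hab : IntervalIntegrable g μ a b) (hb : IntegrableOn g (Ioi b) μ) :
    IntegrableOn g (Ioi a) μ :=
  (hab.1.union hb).mono_set Ioi_subset_Ioc_union_Ioi

theorem intervalIntegrable_comp_add_right_sub {a b : ℝ → E} {s p q : ℝ}
    (ha : IntervalIntegrable a volume (p + s) (q + s)) (hb : IntervalIntegrable b volume p q) :
    IntervalIntegrable (fun τ => a (τ + s) - b τ) volume p q :=
  ((IntervalIntegrable.comp_add_right_iff enorm_ne_top).2 ha).sub hb

theorem integrableOn_Ioi_comp_add_right_iff {g : ℝ → E} {a d : ℝ} :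
    IntegrableOn (fun τ => g (τ + d)) (Ioi a) ↔ IntegrableOn g (Ioi (a + d)) := by
  simpa only [preimage_add_const_Ioi, add_sub_cancel_right] using!
    (measurePreserving_add_right volume d).integrableOn_comp_preimage
      (measurableEmbedding_addRight d) (f := g) (s := Ioi (a + d))

theorem setIntegral_Ioi_comp_add_right [NormedSpace ℝ E] (g : ℝ → E) (a d : ℝ) :
    ∫ τ in Ioi a, g (τ + d) = ∫ τ in Ioi (a + d), g τ := by
  simpa only [preimage_add_const_Ioi, add_sub_cancel_right] using
    (measurePreserving_add_right volume d).setIntegral_preimage_emb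
      (measurableEmbedding_addRight d) g (Ioi (a + d))

end RealLine

section Cocycle

variable {E : Type*} [NormedAddCommGroup E] [NormedSpace ℝ E] {a b c : ℝ → E} {s t : ℝ}

/-- The quantity `ω(u,v;s)`, in terms of the observable along the two orbits: `a τ = φ(f_τ u)` and
`b τ = φ(f_τ v)`. Without integrability of `τ ↦ a (τ + s) - b τ` on `(0, ∞)` the improper integral
has the junk value `0`. -/
noncomputable def asymptoticCocycle (P : E) (a b : ℝ → E) (s : ℝ) : E :=
  (∫ τ in 0..s, a τ) - s • P + ∫ τ in Ioi 0, (a (τ + s) - b τ)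

theorem asymptoticCocycle_eq_cut_at (ha : ∀ p q, IntervalIntegrable a volume p q)
    (hb : ∀ p q, IntervalIntegrable b volume p q)
    (hab : IntegrableOn (fun τ => a (τ + s) - b τ) (Ioi 0)) (P : E) (T : ℝ) :
    asymptoticCocycle P a b s = (∫ τ in 0..(T + s), a τ) - (∫ τ in 0..T, b τ) - s • P +
      ∫ τ in Ioi T, (a (τ + s) - b τ) := by
  have htail : (∫ τ in 0..T, (a (τ + s) - b τ)) + ∫ τ in Ioi T, (a (τ + s) - b τ) =
      ∫ τ in Ioi 0, (a (τ + s) - b τ) :=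
    intervalIntegral.integral_interval_add_Ioi hab
      (integrableOn_Ioi_of_intervalIntegrable
        (intervalIntegrable_comp_add_right_sub (ha _ _) (hb _ _)) hab)
  have hfinite : ∫ τ in 0..T, (a (τ + s) - b τ) = (∫ τ in s..(T + s), a τ) - ∫ τ in 0..T, b τ := by
    rw [intervalIntegral.integral_sub
      ((IntervalIntegrable.comp_add_right_iff enorm_ne_top).2 (ha _ _)) (hb _ _),
      intervalIntegral.integral_comp_add_right, zero_add]
  rw [asymptoticCocycle, ← htail, hfinite,
    ← intervalIntegral.integral_add_adjacent_intervals (ha 0 s) (ha s (T + s))]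
  abel

theorem asymptoticCocycle_add (ha : ∀ p q, IntervalIntegrable a volume p q)
    (hb : ∀ p q, IntervalIntegrable b volume p q)
    (hab : IntegrableOn (fun τ => a (τ + s) - b τ) (Ioi 0))
    (hbc : IntegrableOn (fun τ => b (τ + t) - c τ) (Ioi 0)) (P : E) :
    asymptoticCocycle P a c (s + t) = asymptoticCocycle P a b s + asymptoticCocycle P b c t := by
  have hshift : IntegrableOn (fun τ => a (τ + t + s) - b (τ + t)) (Ioi 0) :=
    integrableOn_Ioi_comp_add_right_iff.2 <| integrableOn_Ioi_of_intervalIntegrable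
      (intervalIntegrable_comp_add_right_sub (ha _ _) (hb _ _)) hab
  have htail : ∫ τ in Ioi 0, (a (τ + (s + t)) - c τ) =
      (∫ τ in Ioi t, (a (τ + s) - b τ)) + ∫ τ in Ioi 0, (b (τ + t) - c τ) := by
    calc ∫ τ in Ioi 0, (a (τ + (s + t)) - c τ)
        = ∫ τ in Ioi 0, ((a (τ + t + s) - b (τ + t)) + (b (τ + t) - c τ)) := by
          simp only [sub_add_sub_cancel, add_assoc, add_comm s t]
      _ = (∫ τ in Ioi 0, (a (τ + t + s) - b (τ + t))) + ∫ τ in Ioi 0, (b (τ + t) - c τ) :=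
          integral_add hshift hbc
      _ = (∫ τ in Ioi t, (a (τ + s) - b τ)) + ∫ τ in Ioi 0, (b (τ + t) - c τ) := by
          rw [setIntegral_Ioi_comp_add_right (fun τ => a (τ + s) - b τ), zero_add]
  rw [asymptoticCocycle_eq_cut_at ha hb hab P t, asymptoticCocycle, asymptoticCocycle, htail,
    add_comm t s, add_smul]
  abel

end Cocycle

section Holder

theorem integrableOn_Ioi_const_rpow {r : ℝ} (hr₀ : 0 < r) (hr₁ : r < 1) (a : ℝ) :
    IntegrableOn (fun τ : ℝ => r ^ τ) (Ioi a) := by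
  simpa only [Real.rpow_def_of_pos hr₀] using integrableOn_exp_mul_Ioi (Real.log_neg hr₀ hr₁) a

theorem holderWith_of_dist_le {X Y : Type*} [PseudoMetricSpace X] [PseudoMetricSpace Y]
    {φ : X → Y} {C : ℝ} {r : ℝ≥0} (h : ∀ x y, dist (φ x) (φ y) ≤ C * dist x y ^ (r : ℝ)) :
    HolderWith C.toNNReal r φ := by
  intro x y
  rw [edist_dist, edist_dist, ENNReal.ofReal_rpow_of_nonneg dist_nonneg r.coe_nonneg,
    ← ENNReal.ofReal, ← ENNReal.ofReal_mul' (by positivity)]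
  exact ENNReal.ofReal_le_ofReal (h x y)

variable {X E : Type*} [PseudoMetricSpace X] [NormedAddCommGroup E] {φ : X → E} {C r : ℝ≥0}
  {u v w : ℝ → X} {δ lam : ℝ}

theorem integrableOn_Ioi_sub_of_holderWith (hφ : HolderWith C r φ) (hr : 0 < r) (hlam₀ : 0 < lam)
    (hlam₁ : lam < 1) (hu : Continuous u) (hv : Continuous v) {a : ℝ}
    (huv : ∀ τ, a < τ → dist (u τ) (v τ) ≤ δ * lam ^ τ) :
    IntegrableOn (fun τ => φ (u τ) - φ (v τ)) (Ioi a) := by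
  have hφc := hφ.continuous hr
  have hbound : IntegrableOn (fun τ : ℝ => C * (δ ^ (r : ℝ) * (lam ^ (r : ℝ)) ^ τ)) (Ioi a) :=
    ((integrableOn_Ioi_const_rpow (Real.rpow_pos_of_pos hlam₀ r)
      (Real.rpow_lt_one hlam₀.le hlam₁ (NNReal.coe_pos.2 hr)) a).const_mul _).const_mul _
  refine hbound.mono' ((hφc.comp hu).sub (hφc.comp hv)).aestronglyMeasurable ?_
  filter_upwards [ae_restrict_mem measurableSet_Ioi] with τ hτ
  have hδ : 0 ≤ δ :=
    nonneg_of_mul_nonneg_left (dist_nonneg.trans (huv τ hτ)) (Real.rpow_pos_of_pos hlam₀ τ)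
  calc ‖φ (u τ) - φ (v τ)‖ = dist (φ (u τ)) (φ (v τ)) := (dist_eq_norm _ _).symm
    _ ≤ C * (δ * lam ^ τ) ^ (r : ℝ) := hφ.dist_le_of_le (huv τ hτ)
    _ = C * (δ ^ (r : ℝ) * (lam ^ (r : ℝ)) ^ τ) := by
      rw [Real.mul_rpow hδ (Real.rpow_nonneg hlam₀.le τ), ← Real.rpow_mul hlam₀.le, mul_comm τ,
        Real.rpow_mul hlam₀.le]

theorem stmt11_general [NormedSpace ℝ E] (hφ : HolderWith C r φ) (hr : 0 < r) (P : E)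
    (hu : Continuous u) (hv : Continuous v) (hw : Continuous w) (hlam₀ : 0 < lam) (hlam₁ : lam < 1)
    {s t : ℝ} (huv : ∀ τ, 0 ≤ τ → dist (u (τ + s)) (v τ) ≤ δ * lam ^ τ)
    (hvw : ∀ τ, 0 ≤ τ → dist (v (τ + t)) (w τ) ≤ δ * lam ^ τ) :
    asymptoticCocycle P (φ ∘ u) (φ ∘ w) (s + t) =
      asymptoticCocycle P (φ ∘ u) (φ ∘ v) s + asymptoticCocycle P (φ ∘ v) (φ ∘ w) t := by
  have hφc := hφ.continuous hr
  exact asymptoticCocycle_add (fun p q => (hφc.comp hu).intervalIntegrable p q)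
    (fun p q => (hφc.comp hv).intervalIntegrable p q)
    (integrableOn_Ioi_sub_of_holderWith hφ hr hlam₀ hlam₁ (hu.comp (continuous_add_const s)) hv
      fun τ hτ => huv τ hτ.le)
    (integrableOn_Ioi_sub_of_holderWith hφ hr hlam₀ hlam₁ (hv.comp (continuous_add_const t)) hw
      fun τ hτ => hvw τ hτ.le) P

end Holder

/-- Cocycle relation for `ω(u,v;s) = Φ(u,s) − sP + ∫_0^∞ (φ(f_{τ+s} u) − φ(f_τ v)) dτ`:
if the orbit of `x` (shifted by `t₁`) tracks that of `z`, the orbit of `z` (shifted by `t₂`)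
tracks that of `y`, and the orbit of `x` (shifted by `t₁+t₂`) tracks that of `y`, all
exponentially, then `ω(x,y;t₁+t₂) = ω(x,z;t₁) + ω(z,y;t₂)`. -/
theorem stmt11 {X : Type*} [MetricSpace X]
    (f : ℝ → X → X)
    (hcont : Continuous fun p : ℝ × X => f p.1 p.2)
    (hf0 : ∀ x, f 0 x = x)
    (hfadd : ∀ s t x, f (s + t) x = f s (f t x))
    (σ : ℝ) (hσ : 0 < σ) (φ : X → ℝ) (C Cb : ℝ)
    (hHolder : ∀ a b : X, |φ a - φ b| ≤ C * dist a b ^ σ)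
    (hbdd : ∀ z, |φ z| ≤ Cb)
    (P : ℝ) (x z y : X) (t1 t2 δ lam : ℝ)
    (hδ : 0 < δ) (hlam0 : 0 < lam) (hlam1 : lam < 1)
    (hxz : ∀ τ : ℝ, 0 ≤ τ → dist (f (τ + t1) x) (f τ z) ≤ δ * lam ^ τ)
    (hzy : ∀ τ : ℝ, 0 ≤ τ → dist (f (τ + t2) z) (f τ y) ≤ δ * lam ^ τ)
    (hxy : ∀ τ : ℝ, 0 ≤ τ → dist (f (τ + (t1 + t2)) x) (f τ y) ≤ δ * lam ^ τ) :
    ((∫ s in (0:ℝ)..(t1 + t2), φ (f s x)) - (t1 + t2) * P +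
        ∫ τ in Set.Ioi (0:ℝ), (φ (f (τ + (t1 + t2)) x) - φ (f τ y))) =
      ((∫ s in (0:ℝ)..t1, φ (f s x)) - t1 * P +
        ∫ τ in Set.Ioi (0:ℝ), (φ (f (τ + t1) x) - φ (f τ z))) +
      ((∫ s in (0:ℝ)..t2, φ (f s z)) - t2 * P +
        ∫ τ in Set.Ioi (0:ℝ), (φ (f (τ + t2) z) - φ (f τ y))) := by
  lift σ to ℝ≥0 using hσ.le
  have horbit (p : X) : Continuous fun τ => f τ p := hcont.comp (.prodMk_left p)
  exact stmt11_general (holderWith_of_dist_le hHolder) hσ P (horbit x) (horbit z) (horbit y)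
    hlam0 hlam1 hxz hzy
end

section
/- Let (f_t)_{t∈ℝ} be a continuous flow on a compact metric space (X,d), φ : X → ℝ a continuous function, α ∈ ℝ, and Φ(y,t) = ∫_0^t φ(f_s y) ds. For r > 0 define the continuous-time Carathéodory set function m^F_r(Z) = sup_{T>0} inf { Σ_{(y,t)∈E} e^{Φ(y,t) − tα} : E ⊆ X × [T,∞) finite or countable, Z ⊆ ⋃_{(y,t)∈E} B_t(y,r) }, where B_t(y,r) is the flow Bowen ball; for τ > 0 and ρ > 0 define the discrete-time set function m^{τ,ρ}(Z) = sup_{N∈ℕ} inf { Σ_{(y,n)∈E} e^{Φ(y,nτ) − nτα} : E ⊆ X × {n ∈ ℕ : n ≥ N} finite or countable, Z ⊆ ⋃_{(y,n)∈E} B_n^{f_τ}(y,ρ) }, where B_n^{f_τ}(y,ρ) is the Bowen ball of the time-τ map. If ρ > 0 is such that d(y,z) < ρ implies d(f_t y, f_t z) < r for all t ∈ [0,τ], then m^F_r(Z) ≤ m^{τ,ρ}(Z) for every Z ⊆ X. -/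
open scoped ENNReal

noncomputable section

/-- The Bowen ball of a flow: points whose orbit stays `r`-close to that of `y` for all
times in `[0,t]`. -/
def flowBowen {X : Type*} [MetricSpace X] (f : ℝ → X → X) (r : ℝ) (y : X) (t : ℝ) :
    Set X :=
  {z | ∀ s ∈ Set.Icc (0:ℝ) t, dist (f s y) (f s z) < r}

/-- The Bowen ball of a map: points whose first `n` iterates stay `r`-close to those
of `y`. -/
def mapBowen {X : Type*} (g : X → X) [MetricSpace X] (r : ℝ) (y : X) (n : ℕ) : Set X :=
  {z | ∀ k < n, dist (g^[k] y) (g^[k] z) < r}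

/-- The Birkhoff integral `Φ(y,t) = ∫_0^t φ(f_s y) ds` of `φ` along the flow `f`. -/
def birkhoff {X : Type*} (f : ℝ → X → X) (φ : X → ℝ) (y : X) (t : ℝ) : ℝ :=
  ∫ s in (0:ℝ)..t, φ (f s y)

/-- The continuous-time Carathéodory set function defined via flow Bowen balls of radius
`r` with weights `e^{Φ(y,t) − tα}`. -/
def mFlow {X : Type*} [MetricSpace X] (f : ℝ → X → X) (φ : X → ℝ) (α r : ℝ)
    (Z : Set X) : ℝ≥0∞ :=
  ⨆ (T : ℝ) (_ : 0 < T),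
    ⨅ (E : Set (X × ℝ)) (_ : E.Countable) (_ : ∀ p ∈ E, T ≤ p.2)
      (_ : Z ⊆ ⋃ p ∈ E, flowBowen f r p.1 p.2),
      ∑' p : E, ENNReal.ofReal (Real.exp (birkhoff f φ p.1.1 p.1.2 - p.1.2 * α))

/-- The discrete-time Carathéodory set function defined via Bowen balls of the time-`τ`
map with radius `ρ` and weights `e^{Φ(y,nτ) − nτα}`. -/
def mMap {X : Type*} [MetricSpace X] (f : ℝ → X → X) (φ : X → ℝ) (α τ ρ : ℝ)
    (Z : Set X) : ℝ≥0∞ :=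
  ⨆ N : ℕ,
    ⨅ (E : Set (X × ℕ)) (_ : E.Countable) (_ : ∀ p ∈ E, N ≤ p.2)
      (_ : Z ⊆ ⋃ p ∈ E, mapBowen (f τ) ρ p.1 p.2),
      ∑' p : E, ENNReal.ofReal
        (Real.exp (birkhoff f φ p.1.1 ((p.1.2 : ℝ) * τ) - (p.1.2 : ℝ) * τ * α))

end

/-!
Every time in `[0, nτ]` lies in some `[kτ, (k + 1)τ]` with `k < n`, so `ρ`-closeness of two orbits
at the sampled times `kτ` gives `r`-closeness throughout `[0, nτ]`. Hence replacing `(y, n)` by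
`(y, nτ)` turns a cover by discrete Bowen balls into a cover by flow Bowen balls, and it preserves
the weights, whatever function of `(y, t)` they are.
-/

/-- The infimum of the total weights of the countable families of indices in `A` whose sets `B i`
cover `Z`. It is the common building block of the discrete- and continuous-time Carathéodory set
functions, where `A` prescribes a minimal order of the Bowen balls. -/
noncomputable def coverCost {ι X : Type*} (B : ι → Set X) (w : ι → ℝ≥0∞) (A : Set ι)
    (Z : Set X) : ℝ≥0∞ :=
  ⨅ (E : Set ι) (_ : E.Countable) (_ : ∀ i ∈ E, i ∈ A) (_ : Z ⊆ ⋃ i ∈ E, B i), ∑' i : E, w i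

/-- The Carathéodory set function of flow Bowen balls of radius `r`, for an arbitrary weight `w`
of the pairs (center, order). -/
noncomputable def flowCaratheodory {X : Type*} [MetricSpace X] (f : ℝ → X → X) (r : ℝ)
    (w : X × ℝ → ℝ≥0∞) (Z : Set X) : ℝ≥0∞ :=
  ⨆ (T : ℝ) (_ : 0 < T), coverCost (fun p : X × ℝ => flowBowen f r p.1 p.2) w {p | T ≤ p.2} Z

/-- The Carathéodory set function of Bowen balls of radius `ρ` of a map, for an arbitrary weight
`w` of the pairs (center, order). -/
noncomputable def mapCaratheodory {X : Type*} [MetricSpace X] (g : X → X) (ρ : ℝ)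
    (w : X × ℕ → ℝ≥0∞) (Z : Set X) : ℝ≥0∞ :=
  ⨆ N : ℕ, coverCost (fun p : X × ℕ => mapBowen g ρ p.1 p.2) w {p | N ≤ p.2} Z

/-- A semiflow, without any continuity: an action of the additive monoid of nonnegative reals. Time
ranges over `ℝ`, as in `flowBowen`, but nothing is required of `f t` for `t < 0`. -/
structure IsSemiflow {X : Type*} (f : ℝ → X → X) : Prop where
  map_zero : ∀ x, f 0 x = x
  map_add : ∀ s t, 0 ≤ s → 0 ≤ t → ∀ x, f (s + t) x = f s (f t x)

theorem tsum_image_le_tsum_comp {ι κ : Type*} (g : ι → κ) (w : κ → ℝ≥0∞) (E : Set ι) :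
    ∑' j : g '' E, w j ≤ ∑' i : E, w (g i) :=
  ENNReal.tsum_le_tsum_comp_of_surjective (Set.imageFactorization_surjective (f := g) (s := E))
    fun j => w j

theorem coverCost_le_coverCost_of_mapsTo {ι κ X : Type*} {B : ι → Set X} {B' : κ → Set X}
    {w : ι → ℝ≥0∞} {w' : κ → ℝ≥0∞} {A : Set ι} {A' : Set κ} {g : ι → κ}
    (hg : Set.MapsTo g A A') (hB : ∀ i ∈ A, B i ⊆ B' (g i)) (hw : ∀ i ∈ A, w' (g i) ≤ w i)
    (Z : Set X) : coverCost B' w' A' Z ≤ coverCost B w A Z := by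
  refine le_iInf fun E => le_iInf fun hE => le_iInf fun hEA => le_iInf fun hZ => ?_
  have hcover : Z ⊆ ⋃ j ∈ g '' E, B' j := by
    rw [Set.biUnion_image]
    exact hZ.trans (Set.iUnion₂_mono fun i hi => hB i (hEA i hi))
  have hmem : ∀ j ∈ g '' E, j ∈ A' := Set.forall_mem_image.2 fun i hi => hg (hEA i hi)
  calc coverCost B' w' A' Z
      ≤ ∑' j : g '' E, w' j :=
        iInf_le_of_le _ <| iInf_le_of_le (hE.image g) <| iInf_le_of_le hmem <| iInf_le _ hcover
    _ ≤ ∑' i : E, w' (g i) := tsum_image_le_tsum_comp g w' E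
    _ ≤ ∑' i : E, w i := ENNReal.tsum_le_tsum fun i => hw i (hEA i i.2)

theorem exists_lt_mem_Icc_succ {α : Type*} [LinearOrder α] {a : ℕ → α} {x : α} {n : ℕ}
    (hn : n ≠ 0) (hx : x ∈ Set.Icc (a 0) (a n)) : ∃ k < n, x ∈ Set.Icc (a k) (a (k + 1)) := by
  induction n, Nat.one_le_iff_ne_zero.2 hn using Nat.le_induction with
  | base => exact ⟨0, one_pos, hx⟩
  | succ m hm ih =>
    rcases le_total x (a m) with hxm | hmx
    · obtain ⟨k, hk, hxk⟩ := ih (Nat.one_le_iff_ne_zero.1 hm) ⟨hx.1, hxm⟩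
      exact ⟨k, hk.trans m.lt_succ_self, hxk⟩
    · exact ⟨m, m.lt_succ_self, hmx, hx.2⟩

namespace IsSemiflow

theorem iterate_eq {X : Type*} {f : ℝ → X → X} (hf : IsSemiflow f) {τ : ℝ} (hτ : 0 ≤ τ) (k : ℕ)
    (x : X) : (f τ)^[k] x = f (k * τ) x := by
  induction k with
  | zero => simp only [Function.iterate_zero, id_eq, Nat.cast_zero, zero_mul, hf.map_zero]
  | succ k ih =>
    rw [Function.iterate_succ_apply', ih, ← hf.map_add _ _ hτ (by positivity), Nat.cast_succ,
      add_one_mul, add_comm]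

variable {X : Type*} [MetricSpace X] {f : ℝ → X → X} {r τ ρ : ℝ}

theorem mapBowen_subset_flowBowen (hf : IsSemiflow f) (hτ : 0 ≤ τ)
    (hρr : ∀ y z : X, dist y z < ρ → ∀ t ∈ Set.Icc (0 : ℝ) τ, dist (f t y) (f t z) < r)
    (y : X) {n : ℕ} (hn : n ≠ 0) : mapBowen (f τ) ρ y n ⊆ flowBowen f r y (n * τ) := by
  intro z hz s hs
  obtain ⟨k, hkn, hks, hsk⟩ : ∃ k < n, s ∈ Set.Icc (k * τ) ((k + 1 : ℕ) * τ) :=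
    exists_lt_mem_Icc_succ (a := fun k : ℕ => k * τ) hn (by simpa using hs)
  have hrest : s - k * τ ∈ Set.Icc 0 τ := by
    rw [Nat.cast_succ, add_one_mul] at hsk
    exact ⟨sub_nonneg.2 hks, sub_le_iff_le_add'.2 hsk⟩
  have hfs : ∀ x, f s x = f (s - k * τ) ((f τ)^[k] x) := fun x => by
    rw [hf.iterate_eq hτ, ← hf.map_add _ _ hrest.1 (by positivity), sub_add_cancel]
  rw [hfs y, hfs z]
  exact hρr _ _ (hz k hkn) _ hrest

end IsSemiflow

theorem stmt13_general {X : Type*} [MetricSpace X] {f : ℝ → X → X} (hf : IsSemiflow f)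
    {r τ ρ : ℝ} (hτ : 0 < τ)
    (hρr : ∀ y z : X, dist y z < ρ → ∀ t ∈ Set.Icc (0 : ℝ) τ, dist (f t y) (f t z) < r)
    (w : X × ℝ → ℝ≥0∞) (Z : Set X) :
    flowCaratheodory f r w Z ≤ mapCaratheodory (f τ) ρ (fun p => w (p.1, p.2 * τ)) Z := by
  refine iSup₂_le fun T hT => ?_
  have horder : ∀ n : ℕ, ⌈T / τ⌉₊ ≤ n → T ≤ n * τ := fun n hn =>
    (div_le_iff₀ hτ).1 (Nat.ceil_le.1 hn)
  have hne : ∀ n : ℕ, ⌈T / τ⌉₊ ≤ n → n ≠ 0 := fun n hn =>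
    ((Nat.ceil_pos.2 (div_pos hT hτ)).trans_le hn).ne'
  refine le_trans ?_ (le_iSup _ ⌈T / τ⌉₊)
  exact coverCost_le_coverCost_of_mapsTo (g := fun p : X × ℕ => (p.1, p.2 * τ))
    (fun p hp => horder p.2 hp)
    (fun p hp => hf.mapBowen_subset_flowBowen hτ.le hρr p.1 (hne p.2 hp)) (fun _ _ => le_rfl) Z

/-- If `ρ`-closeness implies `r`-closeness along the flow for all times in `[0,τ]`, then the
continuous-time Carathéodory set function at radius `r` is bounded above by the
discrete-time one of the time-`τ` map at radius `ρ`. -/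
theorem stmt13 {X : Type*} [MetricSpace X] [CompactSpace X]
    (f : ℝ → X → X)
    (hcont : Continuous fun p : ℝ × X => f p.1 p.2)
    (hf0 : ∀ x, f 0 x = x)
    (hfadd : ∀ s t x, f (s + t) x = f s (f t x))
    (φ : X → ℝ) (hφ : Continuous φ) (α : ℝ)
    (r τ ρ : ℝ) (hr : 0 < r) (hτ : 0 < τ) (hρ : 0 < ρ)
    (hρr : ∀ y z : X, dist y z < ρ → ∀ t ∈ Set.Icc (0:ℝ) τ, dist (f t y) (f t z) < r) :
    ∀ Z : Set X, mFlow f φ α r Z ≤ mMap f φ α τ ρ Z := by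
  have hf : IsSemiflow f := ⟨hf0, fun s t _ _ => hfadd s t⟩
  exact stmt13_general hf hτ hρr fun p => ENNReal.ofReal (Real.exp (birkhoff f φ p.1 p.2 - p.2 * α))
end
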